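/- Let z be a complex number. Then ∫_{0 ↗ 1} (e^{iπu² + 2πizu}/(e^{iπu} − e^{−iπu})) du = ∫_{0 ↖ 1} (e^{−iπu² + iπu}/(e^{−2πiu} − 1))·e^{−iπz² + 2πi(u − 1/2)z} du. (This is the integral transformation formula of the Mordell integral specialized to τ = 1 and x = z + 1/2.) -/

import Mathlib

open scoped Real
open MeasureTheory Set Complex

/-- Integral along the straight line `t ↦ c + e^{iθ} t`, `t ∈ ℝ`. -/
noncomputable def lineInt (c θ : ℝ) (f : ℂ → ℂ) : ℂ :=
  ∫ t : ℝ, f ((c : ℂ) + Complex.exp ((θ : ℂ) * Complex.I) * (t : ℂ)) *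
    Complex.exp ((θ : ℂ) * Complex.I)

/-!
Put `L(z) = ∫_{0 ↗ 1} e^{iπu² + 2πizu} / (e^{iπu} - e^{-iπu}) du`. Replacing `z` by `z + 1` changes
the integrand by a Gaussian, and moving the line of integration to `1 ↗ 2` turns `L(z)` into
`e^{2πiz} L(z + 1)`, up to the residue at `u = 1`. That residue is proportional to `e^{2πiz}`, so it
cancels in the combination `L(z) - e^{2πiz} L(0)`. The two functional equations give
`L(z) (e^{2πiz} - 1) = e^{2πiz} - e^{iπz - iπz²}`. Complex conjugation expresses the integral
over `0 ↖ 1` through `L`, so that it satisfies the same equation. Both sides being continuous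
in `z`, they agree also where `e^{2πiz} = 1`.
-/

open Filter Topology ComplexConjugate Interval

section LineIntegrals

theorem parallelogram_integral_sub_eq {E : Type*} [NormedAddCommGroup E] [NormedSpace ℂ E]
    {f : ℂ → E} {ω : ℂ} {a b S T : ℝ}
    (hf : ∀ x ∈ [[a, b]], ∀ t ∈ [[S, T]], DifferentiableAt ℂ f (x + ω * t)) :
    (ω • ∫ t in S..T, f (b + ω * t)) - ω • ∫ t in S..T, f (a + ω * t) =
      (∫ x in a..b, f (x + ω * T)) - ∫ x in a..b, f (x + ω * S) := by
  let L : ℝ × ℝ →L[ℝ] ℂ :=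
    ofRealCLM ∘L .fst ℝ ℝ ℝ + ω • (ofRealCLM ∘L .snd ℝ ℝ ℝ)
  let f' (p : ℝ × ℝ) : ℝ × ℝ →L[ℝ] E := (fderiv ℂ f (L p)).restrictScalars ℝ ∘L L
  have hderiv : ∀ p ∈ [[a, b]] ×ˢ [[S, T]], HasFDerivAt (fun p ↦ f (L p)) (f' p) p := fun p hp ↦
    ((hf p.1 hp.1 p.2 hp.2).hasFDerivAt.restrictScalars ℝ).comp p L.hasFDerivAt
  have hcont : ContinuousOn (fun p ↦ f (L p)) ([[a, b]] ×ˢ [[S, T]]) := fun p hp ↦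
    (hderiv p hp).continuousAt.continuousWithinAt
  have hinterior : Ioo (min a b) (max a b) ×ˢ Ioo (min S T) (max S T) ⊆ [[a, b]] ×ˢ [[S, T]] :=
    prod_mono Ioo_subset_Icc_self Ioo_subset_Icc_self
  have hdivergence (p : ℝ × ℝ) : (ω • f' p) (1, 0) + (-f' p) (0, 1) = 0 := by
    simp [f', L]
  have key := integral2_divergence_prod_of_hasFDerivAt (fun p ↦ ω • f (L p)) (fun p ↦ -f (L p))
    (fun p ↦ ω • f' p) (fun p ↦ -f' p) a S b T (hcont.const_smul ω) hcont.neg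
    (fun p hp ↦ (hderiv p (hinterior hp)).const_smul ω) (fun p hp ↦ (hderiv p (hinterior hp)).neg)
    (by simp only [hdivergence]; exact integrableOn_zero)
  simp only [hdivergence, intervalIntegral.integral_zero, intervalIntegral.integral_neg,
    intervalIntegral.integral_smul] at key
  simp only [L, add_apply, smul_apply, ContinuousLinearMap.comp_apply,
    ContinuousLinearMap.coe_fst', ContinuousLinearMap.coe_snd', ofRealCLM_apply, smul_eq_mul] at key
  rw [← sub_eq_zero, key]
  abel

/-- Integrability of `f` along the line `t ↦ c + e^{iθ} t`, so that `lineInt c θ f` is not a junk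
value. -/
def LineIntegrable (c θ : ℝ) (f : ℂ → ℂ) : Prop :=
  Integrable fun t : ℝ ↦ f (c + exp (θ * I) * t)

variable {c θ : ℝ} {f g : ℂ → ℂ}

lemma LineIntegrable.sub (hf : LineIntegrable c θ f) (hg : LineIntegrable c θ g) :
    LineIntegrable c θ fun u ↦ f u - g u :=
  Integrable.sub hf hg

lemma LineIntegrable.const_mul (hf : LineIntegrable c θ f) (w : ℂ) :
    LineIntegrable c θ fun u ↦ w * f u :=
  Integrable.const_mul hf w

lemma LineIntegrable.congr (hf : LineIntegrable c θ f)
    (h : ∀ t : ℝ, f (c + exp (θ * I) * t) = g (c + exp (θ * I) * t)) : LineIntegrable c θ g :=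
  (integrable_congr (.of_forall h)).mp hf

lemma lineInt_eq_integral_mul (c θ : ℝ) (f : ℂ → ℂ) :
    lineInt c θ f = (∫ t : ℝ, f (c + exp (θ * I) * t)) * exp (θ * I) :=
  integral_mul_const _ _

lemma lineInt_congr (h : ∀ t : ℝ, f (c + exp (θ * I) * t) = g (c + exp (θ * I) * t)) :
    lineInt c θ f = lineInt c θ g := by
  simp only [lineInt, h]

lemma lineInt_add (hf : LineIntegrable c θ f) (hg : LineIntegrable c θ g) :
    lineInt c θ (fun u ↦ f u + g u) = lineInt c θ f + lineInt c θ g := by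
  simp only [lineInt_eq_integral_mul, integral_add hf hg, add_mul]

lemma lineInt_sub (hf : LineIntegrable c θ f) (hg : LineIntegrable c θ g) :
    lineInt c θ (fun u ↦ f u - g u) = lineInt c θ f - lineInt c θ g := by
  simp only [lineInt_eq_integral_mul, integral_sub hf hg, sub_mul]

lemma lineInt_const_mul (w : ℂ) (f : ℂ → ℂ) :
    lineInt c θ (fun u ↦ w * f u) = w * lineInt c θ f := by
  simp only [lineInt_eq_integral_mul, integral_const_mul, mul_assoc]

lemma lineIntegrable_add_iff (c d θ : ℝ) (f : ℂ → ℂ) :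
    LineIntegrable (c + d) θ f ↔ LineIntegrable c θ fun u ↦ f (u + d) := by
  simp only [LineIntegrable, ofReal_add, add_right_comm]

lemma lineInt_add_left (c d θ : ℝ) (f : ℂ → ℂ) :
    lineInt (c + d) θ f = lineInt c θ fun u ↦ f (u + d) := by
  simp only [lineInt, ofReal_add, add_right_comm]

lemma lineInt_pi_sub (c θ : ℝ) (f : ℂ → ℂ) :
    lineInt c (π - θ) f = -conj (lineInt c θ fun u ↦ conj (f (conj u))) := by
  have hdir : exp ((π - θ : ℝ) * I) = -conj (exp (θ * I)) := by
    rw [← exp_conj, map_mul, conj_ofReal, conj_I, ofReal_sub, sub_mul, exp_sub, exp_pi_mul_I,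
      mul_neg, exp_neg, neg_div, one_div]
  rw [lineInt, ← integral_neg_eq_self, hdir, lineInt, ← integral_conj, ← integral_neg]
  simp

theorem lineInt_eq_lineInt_of_differentiableAt {a b : ℝ}
    (hf : ∀ x ∈ [[a, b]], ∀ t : ℝ, DifferentiableAt ℂ f (x + exp (θ * I) * t))
    (ha : LineIntegrable a θ f) (hb : LineIntegrable b θ f)
    (hdecay : TendstoUniformlyOn (fun t x : ℝ ↦ f (x + exp (θ * I) * t)) 0 (cocompact ℝ) [[a, b]]) :
    lineInt a θ f = lineInt b θ f := by
  set ω := exp (θ * I)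
  have hedge (l : Filter ℝ) [l.IsCountablyGenerated] (hl : l ≤ cocompact ℝ) :
      Tendsto (fun T : ℝ ↦ ∫ x in a..b, f (x + ω * T)) l (𝓝 0) := by
    have hcont (t : ℝ) : ContinuousOn (fun x : ℝ ↦ f (x + ω * t)) [[a, b]] := fun x hx ↦
      (ContinuousAt.comp (f := fun x : ℝ ↦ (x + ω * t : ℂ)) (hf x hx t).continuousAt
        (by fun_prop)).continuousWithinAt
    have hdecay_l : TendstoUniformlyOn (fun t x : ℝ ↦ f (x + ω * t)) 0 l [[a, b]] :=
      fun v hv ↦ hl (hdecay v hv)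
    simpa using hdecay_l.tendsto_intervalIntegral_of_continuousOn (μ := volume) (.of_forall hcont)
  have hsides {c : ℝ} (hc : LineIntegrable c θ f) :
      Tendsto (fun T : ℝ ↦ ω • ∫ t in -T..T, f (c + ω * t)) atTop (𝓝 (lineInt c θ f)) := by
    rw [lineInt_eq_integral_mul, mul_comm]
    exact (intervalIntegral_tendsto_integral hc tendsto_neg_atTop_atBot tendsto_id).const_smul ω
  have hcauchy (T : ℝ) := parallelogram_integral_sub_eq (S := -T) (T := T) fun x hx t _ ↦ hf x hx t
  have hlim := (hedge atTop atTop_le_cocompact).sub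
    ((hedge atBot atBot_le_cocompact).comp tendsto_neg_atTop_atBot)
  rw [sub_zero] at hlim
  exact (sub_eq_zero.mp <| tendsto_nhds_unique ((hsides hb).sub (hsides ha)) <|
    hlim.congr fun T ↦ (hcauchy T).symm).symm

end LineIntegrals

theorem exists_differentiableAt_eq_div_of_simple_zero {f g : ℂ → ℂ} {a : ℂ}
    (hf : Differentiable ℂ f) (hg : Differentiable ℂ g) (hfa : f a = 0) (hga : g a = 0)
    (hga' : deriv g a ≠ 0) :
    ∃ h : ℂ → ℂ, (∀ u, u = a ∨ g u ≠ 0 → DifferentiableAt ℂ h u) ∧ ∀ u ≠ a, h u = f u / g u := by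
  have hdslope {k : ℂ → ℂ} (hk : Differentiable ℂ k) : Differentiable ℂ (dslope k a) :=
    differentiableOn_univ.mp <|
      (Complex.differentiableOn_dslope univ_mem).mpr hk.differentiableOn
  refine ⟨fun u ↦ dslope f a u / dslope g a u, fun u hu ↦ ?_, fun u hu ↦ ?_⟩
  · refine (hdslope hf u).fun_div (hdslope hg u) ?_
    rcases eq_or_ne u a with rfl | hne
    · rwa [dslope_same]
    · rw [dslope_of_ne _ hne, slope_def_field, hga, sub_zero]
      exact div_ne_zero (hu.resolve_left hne) (sub_ne_zero.mpr hne)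
  · beta_reduce
    rw [dslope_of_ne _ hu, dslope_of_ne _ hu, slope_def_field, slope_def_field, hfa, hga, sub_zero,
      sub_zero, div_div_div_cancel_right₀ (sub_ne_zero.mpr hu)]

lemma dense_integerComplement : Dense integerComplement :=
  (countable_range _).dense_compl ℝ

lemma exp_two_pi_mul_I_mul_ne_one {z : ℂ} (hz : z ∈ integerComplement) :
    exp (2 * π * I * z) ≠ 1 := by
  rw [Ne, exp_eq_one_iff]
  rintro ⟨n, hn⟩
  exact hz ⟨n, mul_left_cancel₀ two_pi_I_ne_zero (by rw [hn, mul_comm])⟩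

lemma ofReal_mem_integerComplement {c : ℝ} (hc : 0 < c) (hc' : c < 1) :
    (c : ℂ) ∈ integerComplement := by
  rintro ⟨n, hn⟩
  have hn : (n : ℝ) = c := mod_cast hn
  have h0 : 0 < n := by exact_mod_cast hn ▸ hc
  have h1 : n < 1 := by exact_mod_cast hn ▸ hc'
  lia

section Diagonal

/-- The primitive eighth root of unity `e^{iπ/4}`, the direction of the line `0 ↗ 1`. -/
noncomputable def ζ₈ : ℂ := exp ((π / 4 : ℝ) * I)

lemma ζ₈_im : ζ₈.im = √2 / 2 := by
  rw [ζ₈, exp_ofReal_mul_I_im, Real.sin_pi_div_four]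

lemma norm_ζ₈ : ‖ζ₈‖ = 1 := norm_exp_ofReal_mul_I _

lemma ζ₈_sq : ζ₈ ^ 2 = I := by
  rw [ζ₈, ← exp_nat_mul]
  convert exp_pi_div_two_mul_I using 2
  push_cast
  ring

lemma add_ζ₈_mul_eq_intCast_iff {x t : ℝ} {n : ℤ} : (x + ζ₈ * t : ℂ) = n ↔ t = 0 ∧ x = n := by
  refine ⟨fun h ↦ ?_, fun ⟨ht, hx⟩ ↦ by simp [ht, hx]⟩
  have ht : t = 0 := by simpa [ζ₈_im] using congrArg im h
  subst ht
  exact ⟨rfl, by simpa using congrArg re h⟩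

lemma add_ζ₈_mul_mem_integerComplement {c : ℝ} (hc : (c : ℂ) ∈ integerComplement) (t : ℝ) :
    (c + ζ₈ * t : ℂ) ∈ integerComplement := by
  rintro ⟨n, hn⟩
  exact hc ⟨n, by rw [(add_ζ₈_mul_eq_intCast_iff.mp hn.symm).2, ofReal_intCast]⟩

lemma add_ζ₈_mul_eq_one_or_mem_integerComplement {c x : ℝ} (hc : 0 < c) (hc' : c < 1)
    (hx : x ∈ Icc c (c + 1)) (t : ℝ) :
    (x + ζ₈ * t : ℂ) = 1 ∨ (x + ζ₈ * t : ℂ) ∈ integerComplement := by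
  by_contra! h
  obtain ⟨n, hn⟩ := not_not.mp h.2
  obtain ⟨-, rfl⟩ := add_ζ₈_mul_eq_intCast_iff.mp hn.symm
  have h0 : 0 < n := by exact_mod_cast hc.trans_le hx.1
  have h2 : n < 2 := by exact_mod_cast hx.2.trans_lt (by linarith : c + 1 < 2)
  obtain rfl : n = 1 := by lia
  exact h.1 (by rw [← hn, Int.cast_one])

end Diagonal

section Integrand

/-- The numerator `e^{iπu² + 2πizu}` of the Mordell integrand. -/
noncomputable def mordellNum (z u : ℂ) : ℂ :=
  exp (π * I * u ^ 2 + 2 * π * I * z * u)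

/-- The denominator `e^{iπu} - e^{-iπu} = 2i sin πu` of the Mordell integrand. -/
noncomputable def mordellDenom (u : ℂ) : ℂ :=
  exp (π * I * u) - exp (-(π * I * u))

/-- The integrand over `0 ↗ 1` of the Mordell integral at `τ = 1`, whose poles are the integers. -/
noncomputable def mordellIntegrand (z u : ℂ) : ℂ :=
  mordellNum z u / mordellDenom u

@[fun_prop]
lemma differentiable_mordellDenom : Differentiable ℂ mordellDenom := by
  unfold mordellDenom
  fun_prop

lemma mordellDenom_eq_sin (u : ℂ) : mordellDenom u = 2 * I * sin (π * u) := by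
  rw [mordellDenom, Complex.sin, mul_right_comm (π : ℂ) I u, neg_mul]
  linear_combination (exp (π * u * I) - exp (-(π * u * I))) * I_mul_I

lemma mordellDenom_ne_zero {u : ℂ} (hu : u ∈ integerComplement) : mordellDenom u ≠ 0 := by
  rw [mordellDenom_eq_sin]
  refine mul_ne_zero (mul_ne_zero two_ne_zero I_ne_zero) (sin_ne_zero_iff.mpr fun n hn ↦ ?_)
  exact hu ⟨n, mul_left_cancel₀ (ofReal_ne_zero.mpr Real.pi_ne_zero) (by rw [hn, mul_comm])⟩

lemma mordellDenom_add_one (u : ℂ) : mordellDenom (u + 1) = -mordellDenom u := by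
  rw [mordellDenom_eq_sin, mordellDenom_eq_sin, mul_add_one, sin_add_pi, mul_neg]

lemma mordellDenom_one : mordellDenom 1 = 0 := by
  rw [mordellDenom_eq_sin, mul_one, sin_pi, mul_zero]

lemma deriv_mordellDenom_one : deriv mordellDenom 1 = -(2 * π * I) := by
  have hlin : HasDerivAt (fun u : ℂ ↦ (π * I * u : ℂ)) (π * I) 1 := by
    simpa using (hasDerivAt_id (1 : ℂ)).const_mul (π * I : ℂ)
  have hderiv : deriv mordellDenom 1 = _ := (hlin.cexp.sub hlin.fun_neg.cexp).deriv
  rw [hderiv, mul_one, exp_neg, exp_pi_mul_I]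
  ring

lemma two_pi_mul_abs_im_le_norm_mordellDenom (u : ℂ) : 2 * π * |u.im| ≤ ‖mordellDenom u‖ := by
  have hnorm : ‖exp (π * I * u)‖ = Real.exp (-(π * u.im)) := by simp [norm_exp]
  have hnorm' : ‖exp (-(π * I * u))‖ = Real.exp (π * u.im) := by simp [norm_exp]
  calc 2 * π * |u.im| = 2 * |π * u.im| := by rw [abs_mul, abs_of_pos Real.pi_pos, mul_assoc]
    _ ≤ 2 * |Real.sinh (π * u.im)| := by
      rw [Real.abs_sinh]
      gcongr
      exact Real.self_le_sinh_iff.mpr (abs_nonneg _)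
    _ = |‖exp (π * I * u)‖ - ‖exp (-(π * I * u))‖| := by
      rw [hnorm, hnorm', Real.sinh_eq, abs_div, abs_two, mul_div_cancel₀ _ two_ne_zero,
        abs_sub_comm]
    _ ≤ ‖mordellDenom u‖ := abs_norm_sub_norm_le _ _

lemma abs_le_norm_mordellDenom (x t : ℝ) : |t| ≤ ‖mordellDenom (x + ζ₈ * t)‖ := by
  have him : (x + ζ₈ * t : ℂ).im = √2 / 2 * t := by simp [ζ₈_im]
  have hslope : 1 ≤ 2 * π * (√2 / 2) := by
    nlinarith [Real.pi_gt_three, Real.one_le_sqrt.mpr one_le_two]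
  calc |t| ≤ 2 * π * (√2 / 2) * |t| := le_mul_of_one_le_left (abs_nonneg t) hslope
    _ = 2 * π * |(x + ζ₈ * t : ℂ).im| := by
      rw [him, abs_mul, abs_of_nonneg (by positivity : 0 ≤ √2 / 2), mul_assoc]
    _ ≤ _ := two_pi_mul_abs_im_le_norm_mordellDenom _

lemma exists_pos_le_norm_mordellDenom {c : ℝ} (hc : (c : ℂ) ∈ integerComplement) :
    ∃ δ > 0, ∀ t : ℝ, δ ≤ ‖mordellDenom (c + ζ₈ * t)‖ := by
  have hcont : Continuous fun t : ℝ ↦ ‖mordellDenom (c + ζ₈ * t)‖ :=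
    (differentiable_mordellDenom.continuous.comp (by fun_prop)).norm
  obtain ⟨t₀, ht₀⟩ := hcont.exists_forall_le <|
    tendsto_atTop_mono (abs_le_norm_mordellDenom c) tendsto_norm_cocompact_atTop
  exact ⟨_, norm_pos_iff.mpr <| mordellDenom_ne_zero <| add_ζ₈_mul_mem_integerComplement hc t₀, ht₀⟩

lemma mordellNum_add_ζ₈_mul (z : ℂ) (x t : ℝ) :
    mordellNum z (x + ζ₈ * t) =
      exp (-π * t ^ 2 + 2 * π * I * ζ₈ * (x + z) * t + (π * I * x ^ 2 + 2 * π * I * z * x)) := by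
  rw [mordellNum]
  congr 1
  linear_combination (π : ℂ) * I * t ^ 2 * ζ₈_sq + (π : ℂ) * t ^ 2 * I_mul_I

lemma norm_mordellNum_le {z : ℂ} {x R : ℝ} (hz : ‖z‖ ≤ R) (hx : |x| ≤ R) (t : ℝ) :
    ‖mordellNum z (x + ζ₈ * t)‖ ≤ Real.exp (10 * π * R ^ 2) * Real.exp (-(π / 2) * t ^ 2) := by
  have hR : 0 ≤ R := (norm_nonneg z).trans hz
  have hquad : (-π * t ^ 2 : ℂ).re = -π * t ^ 2 := by norm_cast
  have hlin : (2 * π * I * ζ₈ * (x + z) * t).re ≤ 4 * π * R * |t| :=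
    calc _ ≤ ‖2 * π * I * ζ₈ * (x + z) * t‖ := re_le_norm _
      _ = 2 * π * ‖x + z‖ * |t| := by simp [norm_ζ₈, abs_of_pos Real.pi_pos]
      _ ≤ 2 * π * (R + R) * |t| := by
        gcongr
        exact (norm_add_le _ _).trans (add_le_add (by simpa using hx) hz)
      _ = 4 * π * R * |t| := by ring
  have hconst : (π * I * x ^ 2 + 2 * π * I * z * x).re ≤ 2 * π * R ^ 2 :=
    calc _ = (2 * π * I * z * x).re := by simp [sq]
      _ ≤ ‖2 * π * I * z * x‖ := re_le_norm _
      _ = 2 * π * (‖z‖ * |x|) := by simp [abs_of_pos Real.pi_pos, mul_assoc]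
      _ ≤ 2 * π * (R * R) := by gcongr
      _ = 2 * π * R ^ 2 := by ring
  have hyoung : 4 * π * R * |t| ≤ π / 2 * t ^ 2 + 8 * π * R ^ 2 := by
    rw [← sq_abs t]
    nlinarith [mul_nonneg Real.pi_pos.le (sq_nonneg (|t| - 4 * R))]
  rw [mordellNum_add_ζ₈_mul, norm_exp, ← Real.exp_add, add_re, add_re, hquad]
  exact Real.exp_le_exp.mpr (by linarith)

lemma exists_norm_mordellIntegrand_le {c : ℝ} (hc : (c : ℂ) ∈ integerComplement) (R : ℝ) :
    ∃ C, ∀ z : ℂ, ‖z‖ ≤ R → ∀ t : ℝ,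
      ‖mordellIntegrand z (c + ζ₈ * t)‖ ≤ C * Real.exp (-(π / 2) * t ^ 2) := by
  obtain ⟨δ, hδ, hδ_le⟩ := exists_pos_le_norm_mordellDenom hc
  refine ⟨Real.exp (10 * π * max R |c| ^ 2) / δ, fun z hz t ↦ ?_⟩
  rw [mordellIntegrand, norm_div, div_mul_eq_mul_div]
  gcongr
  · exact norm_mordellNum_le (hz.trans (le_max_left _ _)) (le_max_right _ _) t
  · exact hδ_le t

lemma tendstoUniformlyOn_mordellIntegrand (z : ℂ) {s : Set ℝ} (hs : Bornology.IsBounded s) :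
    TendstoUniformlyOn (fun t x : ℝ ↦ mordellIntegrand z (x + ζ₈ * t)) 0 (cocompact ℝ) s := by
  obtain ⟨r, hr⟩ := hs.exists_norm_le
  set R := max ‖z‖ r
  have hgauss : Tendsto (fun t : ℝ ↦ Real.exp (10 * π * R ^ 2) * Real.exp (-(π / 2) * t ^ 2))
      (cocompact ℝ) (𝓝 0) := by
    have hsq : Tendsto (fun t : ℝ ↦ t ^ 2) (cocompact ℝ) atTop := by
      simpa [Function.comp_def] using
        (tendsto_pow_atTop two_ne_zero).comp (tendsto_norm_cocompact_atTop (E := ℝ))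
    simpa using (Real.tendsto_exp_atBot.comp <|
      hsq.const_mul_atTop_of_neg (neg_lt_zero.mpr Real.pi_div_two_pos)).const_mul _
  rw [Metric.tendstoUniformlyOn_iff]
  intro ε hε
  filter_upwards [hgauss.eventually_lt_const hε,
    tendsto_norm_cocompact_atTop.eventually_ge_atTop 1] with t hlt ht x hx
  rw [Pi.zero_apply, dist_zero_left]
  calc ‖mordellIntegrand z (x + ζ₈ * t)‖
      ≤ ‖mordellNum z (x + ζ₈ * t)‖ := by
        rw [mordellIntegrand, norm_div]
        exact div_le_self (norm_nonneg _) (ht.trans (abs_le_norm_mordellDenom x t))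
    _ ≤ _ := norm_mordellNum_le (le_max_left _ _) ((hr x hx).trans (le_max_right _ _)) t
    _ < ε := hlt

lemma tendstoUniformlyOn_mordellIntegrand_sub (z w e : ℂ) {s : Set ℝ}
    (hs : Bornology.IsBounded s) :
    TendstoUniformlyOn (fun t x : ℝ ↦ mordellIntegrand z (x + ζ₈ * t) -
      e * mordellIntegrand w (x + ζ₈ * t)) 0 (cocompact ℝ) s := by
  have hlim := (tendstoUniformlyOn_mordellIntegrand z hs).sub
    ((uniformContinuous_id.const_mul' e).comp_tendstoUniformlyOn
      (tendstoUniformlyOn_mordellIntegrand w hs))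
  refine hlim.congr_right fun x _ ↦ ?_
  simp

lemma mordellIntegrand_add_one_left (z : ℂ) {u : ℂ} (hu : u ∈ integerComplement) :
    mordellIntegrand (z + 1) u = mordellIntegrand z u + mordellNum (z + 1 / 2) u := by
  have hnum : mordellNum (z + 1) u =
      mordellNum z u + mordellNum (z + 1 / 2) u * mordellDenom u := by
    simp only [mordellNum, mordellDenom, mul_sub, ← exp_add]
    ring_nf
  rw [mordellIntegrand, hnum, add_div, mul_div_cancel_right₀ _ (mordellDenom_ne_zero hu),
    mordellIntegrand]

lemma mordellIntegrand_add_one_right (z u : ℂ) :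
    mordellIntegrand z (u + 1) = exp (2 * π * I * z) * mordellIntegrand (z + 1) u := by
  have hnum : mordellNum z (u + 1) = -(exp (2 * π * I * z) * mordellNum (z + 1) u) := by
    rw [mordellNum, mordellNum, ← exp_add, ← exp_add_pi_mul_I]
    ring_nf
  rw [mordellIntegrand, hnum, mordellDenom_add_one, neg_div_neg_eq, mul_div_assoc, mordellIntegrand]

lemma mordellIntegrand_sub_add_one_right (z u : ℂ) :
    mordellIntegrand z (u + 1) - exp (2 * π * I * z) * mordellIntegrand 0 (u + 1) =
      exp (2 * π * I * z) * (mordellIntegrand (z + 1) u - mordellIntegrand 1 u) := by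
  rw [mordellIntegrand_add_one_right, mordellIntegrand_add_one_right, mul_zero, exp_zero, one_mul,
    zero_add, mul_sub]

lemma exists_differentiableAt_eq_mordellIntegrand_sub (z : ℂ) :
    ∃ h : ℂ → ℂ, (∀ u, u = 1 ∨ u ∈ integerComplement → DifferentiableAt ℂ h u) ∧
      ∀ u ≠ 1, h u = mordellIntegrand z u - exp (2 * π * I * z) * mordellIntegrand 0 u := by
  have hnum_diff : Differentiable ℂ
      fun u ↦ mordellNum z u - exp (2 * π * I * z) * mordellNum 0 u := by
    unfold mordellNum
    fun_prop
  have hnum_one : mordellNum z 1 - exp (2 * π * I * z) * mordellNum 0 1 = 0 := by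
    rw [mordellNum, mordellNum, ← exp_add, sub_eq_zero]
    ring_nf
  have hderiv : deriv mordellDenom 1 ≠ 0 := by
    rw [deriv_mordellDenom_one]
    exact neg_ne_zero.mpr two_pi_I_ne_zero
  obtain ⟨h, hdiff, heq⟩ := exists_differentiableAt_eq_div_of_simple_zero hnum_diff
    differentiable_mordellDenom hnum_one mordellDenom_one hderiv
  refine ⟨h, fun u hu ↦ hdiff u (hu.imp_right mordellDenom_ne_zero), fun u hu ↦ ?_⟩
  rw [heq u hu, sub_div, mul_div_assoc, mordellIntegrand, mordellIntegrand]

end Integrand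

section Integral

/-- The Mordell integral `∫_{0 ↗ 1} e^{iπu² + 2πizu} / (e^{iπu} - e^{-iπu}) du` along the line that
crosses the real axis at `c`. -/
noncomputable def mordellIntegral (c : ℝ) (z : ℂ) : ℂ :=
  lineInt c (π / 4) (mordellIntegrand z)

variable {c : ℝ}

lemma lineIntegrable_mordellNum (c : ℝ) (z : ℂ) : LineIntegrable c (π / 4) (mordellNum z) := by
  change Integrable fun t : ℝ ↦ mordellNum z (c + ζ₈ * t)
  simp only [mordellNum_add_ζ₈_mul]
  exact integrable_cexp_quadratic (by simpa using Real.pi_pos) _ _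

lemma lineInt_mordellNum (c : ℝ) (z : ℂ) :
    lineInt c (π / 4) (mordellNum z) = ζ₈ * exp (-(π * I * z ^ 2)) := by
  have hπ : (π : ℂ) ≠ 0 := ofReal_ne_zero.mpr Real.pi_ne_zero
  have hgauss : ∫ t : ℝ, mordellNum z (c + ζ₈ * t) = exp (-(π * I * z ^ 2)) := by
    simp only [mordellNum_add_ζ₈_mul]
    rw [integral_cexp_quadratic (by simpa using Real.pi_pos), neg_neg, div_self hπ, one_cpow,
      one_mul]
    congr 1
    field_simp
    rw [ζ₈_sq]
    linear_combination (4 * (c + z) ^ 2 : ℂ) * I_mul_I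
  rw [lineInt_eq_integral_mul, mul_comm, ← hgauss, ζ₈]

lemma continuous_mordellIntegrand_line (hc : (c : ℂ) ∈ integerComplement) (z : ℂ) :
    Continuous fun t : ℝ ↦ mordellIntegrand z (c + ζ₈ * t) := by
  refine Continuous.div (by unfold mordellNum; fun_prop)
    (differentiable_mordellDenom.continuous.comp (by fun_prop)) fun t ↦ ?_
  exact mordellDenom_ne_zero (add_ζ₈_mul_mem_integerComplement hc t)

lemma lineIntegrable_mordellIntegrand (hc : (c : ℂ) ∈ integerComplement) (z : ℂ) :
    LineIntegrable c (π / 4) (mordellIntegrand z) := by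
  obtain ⟨C, hC⟩ := exists_norm_mordellIntegrand_le hc ‖z‖
  exact ((integrable_exp_neg_mul_sq Real.pi_div_two_pos).const_mul C).mono'
    (continuous_mordellIntegrand_line hc z).aestronglyMeasurable (.of_forall (hC z le_rfl))

lemma continuous_mordellIntegral (hc : (c : ℂ) ∈ integerComplement) :
    Continuous (mordellIntegral c) := by
  have hL : mordellIntegral c = fun z ↦ (∫ t : ℝ, mordellIntegrand z (c + ζ₈ * t)) * ζ₈ :=
    funext fun z ↦ lineInt_eq_integral_mul c (π / 4) (mordellIntegrand z)
  rw [hL]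
  refine Continuous.mul_const (continuous_iff_continuousAt.mpr fun z₀ ↦ ?_) _
  obtain ⟨C, hC⟩ := exists_norm_mordellIntegrand_le hc (‖z₀‖ + 1)
  refine continuousAt_of_dominated
    (.of_forall fun z ↦ (continuous_mordellIntegrand_line hc z).aestronglyMeasurable) ?_
    ((integrable_exp_neg_mul_sq Real.pi_div_two_pos).const_mul C) (.of_forall fun t ↦ ?_)
  · filter_upwards [continuous_norm.continuousAt.eventually_lt_const (lt_add_one ‖z₀‖)] with z hz
    exact .of_forall (hC z hz.le)
  · unfold mordellIntegrand mordellNum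
    fun_prop

lemma mordellIntegral_add_one (hc : (c : ℂ) ∈ integerComplement) (z : ℂ) :
    mordellIntegral c (z + 1) =
      mordellIntegral c z + ζ₈ * exp (-(π * I * (z + 1 / 2) ^ 2)) := by
  rw [mordellIntegral, lineInt_congr (g := fun u ↦ mordellIntegrand z u + mordellNum (z + 1 / 2) u)
    fun t ↦ mordellIntegrand_add_one_left z (add_ζ₈_mul_mem_integerComplement hc t),
    lineInt_add (lineIntegrable_mordellIntegrand hc z) (lineIntegrable_mordellNum c _),
    lineInt_mordellNum, mordellIntegral]

theorem mordellIntegral_sub_exp_mul_mordellIntegral_zero (hc : 0 < c) (hc' : c < 1) (z : ℂ) :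
    mordellIntegral c z - exp (2 * π * I * z) * mordellIntegral c 0 =
      exp (2 * π * I * z) * (mordellIntegral c (z + 1) - mordellIntegral c 1) := by
  set e := exp (2 * π * I * z)
  have hcℤ := ofReal_mem_integerComplement hc hc'
  have hline := add_ζ₈_mul_mem_integerComplement hcℤ
  have hint (w : ℂ) := lineIntegrable_mordellIntegrand hcℤ w
  obtain ⟨h, hdiff, heq⟩ := exists_differentiableAt_eq_mordellIntegrand_sub z
  have hleft (t : ℝ) : mordellIntegrand z (c + ζ₈ * t) - e * mordellIntegrand 0 (c + ζ₈ * t) =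
      h (c + ζ₈ * t) :=
    (heq _ (integerComplement.ne_one (hline t))).symm
  have hright (t : ℝ) : e * (mordellIntegrand (z + 1) (c + ζ₈ * t) -
      mordellIntegrand 1 (c + ζ₈ * t)) = h (c + ζ₈ * t + (1 : ℝ)) := by
    rw [ofReal_one, heq _ (add_eq_right.not.mpr (integerComplement.ne_zero (hline t))),
      mordellIntegrand_sub_add_one_right]
  have hint_left : LineIntegrable c (π / 4) h := ((hint z).sub ((hint 0).const_mul e)).congr hleft
  have hint_right : LineIntegrable (c + 1) (π / 4) h :=
    (lineIntegrable_add_iff c 1 _ h).mpr <| (((hint (z + 1)).sub (hint 1)).const_mul e).congr hright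
  have hdiff_strip (x : ℝ) (hx : x ∈ [[c, c + 1]]) (t : ℝ) : DifferentiableAt ℂ h (x + ζ₈ * t) := by
    rw [uIcc_of_le (lt_add_one c).le] at hx
    exact hdiff _ (add_ζ₈_mul_eq_one_or_mem_integerComplement hc hc' hx t)
  have hdecay : TendstoUniformlyOn (fun t x : ℝ ↦ h (x + ζ₈ * t)) 0 (cocompact ℝ)
      [[c, c + 1]] := by
    refine (tendstoUniformlyOn_mordellIntegrand_sub z 0 e isCompact_uIcc.isBounded).congr ?_
    filter_upwards [tendsto_norm_cocompact_atTop.eventually_gt_atTop 0] with t ht x _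
    refine (heq _ fun h1 ↦ ?_).symm
    exact norm_pos_iff.mp ht (add_ζ₈_mul_eq_intCast_iff.mp (h1.trans Int.cast_one.symm)).1
  calc mordellIntegral c z - e * mordellIntegral c 0 = lineInt c (π / 4) h := by
        rw [mordellIntegral, mordellIntegral, ← lineInt_const_mul,
          ← lineInt_sub (hint z) ((hint 0).const_mul e), lineInt_congr hleft]
    _ = lineInt (c + 1) (π / 4) h :=
      lineInt_eq_lineInt_of_differentiableAt hdiff_strip hint_left hint_right hdecay
    _ = e * (mordellIntegral c (z + 1) - mordellIntegral c 1) := by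
        rw [lineInt_add_left, ← lineInt_congr (f := fun u ↦ e * (mordellIntegrand (z + 1) u -
          mordellIntegrand 1 u)) hright, lineInt_const_mul, lineInt_sub (hint (z + 1)) (hint 1),
          mordellIntegral, mordellIntegral]

theorem mordellIntegral_mul_exp_sub_one (hc : 0 < c) (hc' : c < 1) (z : ℂ) :
    mordellIntegral c z * (exp (2 * π * I * z) - 1) =
      exp (2 * π * I * z) - exp (π * I * z - π * I * z ^ 2) := by
  have hcℤ := ofReal_mem_integerComplement hc hc'
  have hshift := mordellIntegral_sub_exp_mul_mordellIntegral_zero hc hc' z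
  have hone := mordellIntegral_add_one hcℤ 0
  rw [zero_add, zero_add] at hone
  rw [mordellIntegral_add_one hcℤ z, hone] at hshift
  have hconst : ζ₈ * exp (-(π * I * (1 / 2) ^ 2)) = 1 := by
    rw [ζ₈, ← exp_add, exp_eq_one_iff]
    exact ⟨0, by push_cast; ring⟩
  have hgauss : exp (2 * π * I * z) * (ζ₈ * exp (-(π * I * (z + 1 / 2) ^ 2))) =
      exp (π * I * z - π * I * z ^ 2) := by
    rw [ζ₈, ← exp_add, ← exp_add]
    push_cast
    ring_nf
  linear_combination -hshift - hgauss + exp (2 * π * I * z) * hconst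

end Integral

section DualIntegral

/-- The integrand over `0 ↖ 1` of the transformed Mordell integral. -/
noncomputable def dualMordellIntegrand (z u : ℂ) : ℂ :=
  exp (-(π * I * u ^ 2) + π * I * u) / (exp (-(2 * π * I * u)) - 1) *
    exp (-(π * I * z ^ 2) + 2 * π * I * (u - 1 / 2) * z)

/-- The transformed Mordell integral over `0 ↖ 1`, along the line that crosses the real axis
at `c`. -/
noncomputable def dualMordellIntegral (c : ℝ) (z : ℂ) : ℂ :=
  lineInt c (3 * π / 4) (dualMordellIntegrand z)

lemma conj_dualMordellIntegrand_conj (z u : ℂ) :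
    conj (dualMordellIntegrand z (conj u)) =
      conj (exp (-(π * I * z ^ 2) - π * I * z)) * mordellIntegrand (-conj z - 1) u := by
  have hdenom : exp (π * I * u) * mordellDenom u = exp (2 * π * I * u) - 1 := by
    rw [mordellDenom, mul_sub, ← exp_add, ← exp_add, add_neg_cancel, exp_zero, ← two_mul]
    simp only [mul_assoc]
  rw [mordellIntegrand, ← mul_div_mul_left _ _ (exp_ne_zero (π * I * u)), hdenom, ← mul_div_assoc]
  simp only [dualMordellIntegrand, map_mul, map_div₀, map_sub, map_add, map_neg, map_pow, map_one,
    map_ofNat, ← exp_conj, conj_conj, conj_I, conj_ofReal, mul_neg, neg_mul, neg_neg]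
  rw [div_mul_eq_mul_div]
  congr 1
  simp only [mordellNum, ← exp_add]
  ring_nf

lemma dualMordellIntegral_eq (c : ℝ) (z : ℂ) :
    dualMordellIntegral c z =
      -(exp (-(π * I * z ^ 2) - π * I * z) * conj (mordellIntegral c (-conj z - 1))) := by
  rw [dualMordellIntegral, show 3 * π / 4 = π - π / 4 by ring, lineInt_pi_sub]
  simp only [conj_dualMordellIntegrand_conj]
  rw [lineInt_const_mul, map_mul, conj_conj, mordellIntegral]

variable {c : ℝ}

lemma continuous_dualMordellIntegral (hc : (c : ℂ) ∈ integerComplement) :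
    Continuous (dualMordellIntegral c) := by
  rw [funext (dualMordellIntegral_eq c)]
  have := continuous_mordellIntegral hc
  fun_prop

theorem dualMordellIntegral_mul_exp_sub_one (hc : 0 < c) (hc' : c < 1) (z : ℂ) :
    dualMordellIntegral c z * (exp (2 * π * I * z) - 1) =
      exp (2 * π * I * z) - exp (π * I * z - π * I * z ^ 2) := by
  set w := -conj z - 1
  have hconj := congrArg conj (mordellIntegral_mul_exp_sub_one hc hc' w)
  have hexp : conj (exp (2 * π * I * w)) = exp (2 * π * I * z) := by
    rw [← exp_conj, ← exp_periodic.int_mul (-1)]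
    simp only [w, map_mul, map_sub, map_neg, map_one, map_ofNat, conj_conj, conj_I, conj_ofReal]
    push_cast
    ring_nf
  have hgauss : exp (-(π * I * z ^ 2) - π * I * z) * conj (exp (π * I * w - π * I * w ^ 2)) =
      exp (2 * π * I * z) := by
    rw [← exp_conj, ← exp_add, ← exp_periodic.int_mul (-1)]
    simp only [w, map_mul, map_sub, map_neg, map_pow, map_one, conj_conj, conj_I, conj_ofReal]
    push_cast
    ring_nf
  have hprefactor : exp (-(π * I * z ^ 2) - π * I * z) * exp (2 * π * I * z) =
      exp (π * I * z - π * I * z ^ 2) := by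
    rw [← exp_add]
    ring_nf
  rw [map_mul, map_sub, map_sub, map_one, hexp] at hconj
  rw [dualMordellIntegral_eq]
  linear_combination -exp (-(π * I * z ^ 2) - π * I * z) * hconj + hgauss - hprefactor

end DualIntegral

/-- The integral transformation formula of the Mordell integral specialized to
`τ = 1`, `x = z + 1/2`. -/
theorem mordell_transform_special (z : ℂ) (c₁ c₂ : ℝ)
    (hc₁ : 0 < c₁) (hc₁' : c₁ < 1) (hc₂ : 0 < c₂) (hc₂' : c₂ < 1) :
    lineInt c₁ (π/4) (fun u =>
      Complex.exp ((π : ℂ) * Complex.I * u ^ 2 + 2 * (π : ℂ) * Complex.I * z * u) /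
        (Complex.exp ((π : ℂ) * Complex.I * u) - Complex.exp (-((π : ℂ) * Complex.I * u)))) =
    lineInt c₂ (3 * π / 4) (fun u =>
      Complex.exp (-((π : ℂ) * Complex.I * u ^ 2) + (π : ℂ) * Complex.I * u) /
        (Complex.exp (-(2 * (π : ℂ) * Complex.I * u)) - 1) *
      Complex.exp (-((π : ℂ) * Complex.I * z ^ 2) +
        2 * (π : ℂ) * Complex.I * (u - 1 / 2) * z)) := by
  refine congrFun (Continuous.ext_on dense_integerComplement
    (continuous_mordellIntegral (ofReal_mem_integerComplement hc₁ hc₁'))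
    (continuous_dualMordellIntegral (ofReal_mem_integerComplement hc₂ hc₂')) fun w hw ↦ ?_) z
  refine mul_right_cancel₀ (sub_ne_zero.mpr (exp_two_pi_mul_I_mul_ne_one hw)) ?_
  rw [mordellIntegral_mul_exp_sub_one hc₁ hc₁', dualMordellIntegral_mul_exp_sub_one hc₂ hc₂']
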